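/- arXiv:2403.09889 — 2 statements merged into one kernel-verified Lean document; each statement's English description precedes it below -/
import Mathlib

section
/- Let V := sup_{s∈[0,1]} ∫‖θ‖₂² dν_s(θ) < ∞ and T := ∫‖ω‖₂² dτ(ω) < ∞. Let z : [0,1] → ℝ^d be a C¹ solution of the mean-field forward ODE, and let p : [0,1] → ℝ^d be a C¹ solution of the associated adjoint ODE. Then for all s ∈ [0,1], ‖p(s)‖₂ ≤ C1·(T+1)·exp(α·C1·(V+1)). -/
open MeasureTheory Real Set
open scoped RealInnerProductSpace

noncomputable section

/-- `σ(z, θ) = σ0(⟪w, z⟫ + b) • u` for `θ = (u, w, b) ∈ ℝ^d × ℝ^d × ℝ ≅ ℝ^{2d+1}`. -/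
def sigmaV (d : ℕ) (σ0 : ℝ → ℝ) (z : EuclideanSpace ℝ (Fin d))
    (θ : EuclideanSpace ℝ (Fin d) × EuclideanSpace ℝ (Fin d) × ℝ) : EuclideanSpace ℝ (Fin d) :=
  σ0 (⟪θ.2.1, z⟫ + θ.2.2) • θ.1

/-- `‖θ‖₂² = ‖u‖₂² + ‖w‖₂² + b²` for `θ = (u, w, b)`. -/
def thetaNormSq (d : ℕ) (θ : EuclideanSpace ℝ (Fin d) × EuclideanSpace ℝ (Fin d) × ℝ) : ℝ :=
  ‖θ.1‖ ^ 2 + ‖θ.2.1‖ ^ 2 + θ.2.2 ^ 2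

/-- `‖ω‖₂² = a² + ‖w‖₂² + b²` for `ω = (a, w, b) ∈ ℝ × ℝ^d × ℝ ≅ ℝ^{d+2}`. -/
def omegaNormSq (d : ℕ) (ω : ℝ × EuclideanSpace ℝ (Fin d) × ℝ) : ℝ :=
  ω.1 ^ 2 + ‖ω.2.1‖ ^ 2 + ω.2.2 ^ 2

/-- The `d × d` matrix `∫ ∇_zσ(z,θ) dμ(θ)`, where `∇_zσ(z,θ) = σ0'(⟪w,z⟫+b) u wᵀ`,
computed entrywise. -/
def intJacZ (d : ℕ) (σ0 : ℝ → ℝ) (z : EuclideanSpace ℝ (Fin d))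
    (μ : Measure (EuclideanSpace ℝ (Fin d) × EuclideanSpace ℝ (Fin d) × ℝ)) :
    Matrix (Fin d) (Fin d) ℝ :=
  Matrix.of fun i j => ∫ θ, deriv σ0 (⟪θ.2.1, z⟫ + θ.2.2) * θ.1 i * θ.2.1 j ∂μ

/-- `∇_zh(z,ω) = a σ0'(⟪w,z⟫+b) w` for `ω = (a, w, b)`. -/
def gradZh (d : ℕ) (σ0 : ℝ → ℝ) (z : EuclideanSpace ℝ (Fin d))
    (ω : ℝ × EuclideanSpace ℝ (Fin d) × ℝ) : EuclideanSpace ℝ (Fin d) :=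
  (ω.1 * deriv σ0 (⟪ω.2.1, z⟫ + ω.2.2)) • ω.2.1

theorem jac_inner_bound (d : ℕ) (C1 : ℝ) (hC1 : 0 < C1) (σ0 : ℝ → ℝ)
    (hb1 : ∀ x : ℝ, |deriv σ0 x| ≤ C1)
    (μ : Measure (EuclideanSpace ℝ (Fin d) × EuclideanSpace ℝ (Fin d) × ℝ)) (V : ℝ)
    (h1 : Integrable (fun θ => thetaNormSq d θ) μ) (h2 : ∫ θ, thetaNormSq d θ ∂μ ≤ V)
    (z : EuclideanSpace ℝ (Fin d))
    (hM : ∀ i j : Fin d,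
      Integrable (fun θ => deriv σ0 (⟪θ.2.1, z⟫ + θ.2.2) * θ.1 i * θ.2.1 j) μ)
    (p : EuclideanSpace ℝ (Fin d)) :
    ‖(WithLp.toLp 2 ((intJacZ d σ0 z μ).transpose.mulVec p) : EuclideanSpace ℝ (Fin d))‖
      ≤ C1 * V * ‖p‖ := by
  set y : EuclideanSpace ℝ (Fin d) :=
    WithLp.toLp 2 ((intJacZ d σ0 z μ).transpose.mulVec p) with hy
  have hyj : ∀ j, y j = ∑ i, (∫ θ, deriv σ0 (⟪θ.2.1, z⟫ + θ.2.2) * θ.1 i * θ.2.1 j ∂μ) * p i := by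
    intro j
    simp [hy, Matrix.mulVec, dotProduct, intJacZ]
  have hV : 0 ≤ V := le_trans (integral_nonneg fun θ => by unfold thetaNormSq; positivity) h2
  have key : ‖y‖ ^ 2 = ∫ θ, deriv σ0 (⟪θ.2.1, z⟫ + θ.2.2) * ⟪θ.1, p⟫ * ⟪θ.2.1, y⟫ ∂μ := by
    have e : ∀ θ : EuclideanSpace ℝ (Fin d) × EuclideanSpace ℝ (Fin d) × ℝ,
        deriv σ0 (⟪θ.2.1, z⟫ + θ.2.2) * ⟪θ.1, p⟫ * ⟪θ.2.1, y⟫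
        = ∑ j, ∑ i, (deriv σ0 (⟪θ.2.1, z⟫ + θ.2.2) * θ.1 i * θ.2.1 j) * (p i * y j) := by
      intro θ
      generalize deriv σ0 (⟪θ.2.1, z⟫ + θ.2.2) = c
      simp only [PiLp.inner_apply, RCLike.inner_apply, conj_trivial]
      rw [Finset.mul_sum]
      refine Finset.sum_congr rfl fun j _ => ?_
      rw [Finset.mul_sum, Finset.sum_mul]
      refine Finset.sum_congr rfl fun i _ => ?_
      ring
    simp_rw [e]
    rw [integral_finsetSum _ fun j _ => integrable_finsetSum _ fun i _ => (hM i j).mul_const _,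
      EuclideanSpace.norm_sq_eq]
    refine Finset.sum_congr rfl fun j _ => ?_
    rw [integral_finsetSum _ fun i _ => (hM i j).mul_const _]
    simp_rw [integral_mul_const]
    rw [Real.norm_eq_abs, sq_abs, sq]
    nth_rewrite 1 [hyj j]
    rw [Finset.sum_mul]
    refine Finset.sum_congr rfl fun i _ => ?_
    ring
  have hle : ‖y‖ ^ 2 ≤ C1 * V * ‖p‖ * ‖y‖ := by
    calc ‖y‖ ^ 2 ≤ |‖y‖ ^ 2| := le_abs_self _
      _ ≤ ∫ θ, thetaNormSq d θ * (C1 * ‖p‖ * ‖y‖) ∂μ := by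
        rw [key, ← Real.norm_eq_abs]
        refine norm_integral_le_of_norm_le (h1.mul_const _) (Filter.Eventually.of_forall fun θ => ?_)
        have a1 := hb1 (⟪θ.2.1, z⟫ + θ.2.2)
        have a2 := abs_real_inner_le_norm θ.1 p
        have a3 := abs_real_inner_le_norm θ.2.1 y
        rw [Real.norm_eq_abs, abs_mul, abs_mul]
        calc _ ≤ C1 * (‖θ.1‖ * ‖p‖) * (‖θ.2.1‖ * ‖y‖) := by gcongr
          _ = (‖θ.1‖ * ‖θ.2.1‖) * (C1 * ‖p‖ * ‖y‖) := by ring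
          _ ≤ _ := by
            gcongr
            unfold thetaNormSq
            nlinarith [sq_nonneg (‖θ.1‖ - ‖θ.2.1‖), sq_nonneg (‖θ.1‖), sq_nonneg (‖θ.2.1‖), sq_nonneg θ.2.2]
      _ = (∫ θ, thetaNormSq d θ ∂μ) * (C1 * ‖p‖ * ‖y‖) := integral_mul_const _ _
      _ ≤ V * (C1 * ‖p‖ * ‖y‖) := by gcongr
      _ = _ := by ring
  rcases (norm_nonneg y).eq_or_lt with h0 | h0
  · rw [← h0]; positivity
  · exact le_of_mul_le_mul_right (by rw [← sq]; exact hle) h0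

/-- a priori bound on any C¹ solution of the adjoint ODE
`p'(s) = −α (∫ ∇_zσ(z(s),θ) dν_s)ᵀ p(s)`, `p(1) = ∫ ∇_zh(z(1),ω) dτ(ω)`:
`‖p(s)‖₂ ≤ C1 (T+1) exp(α C1 (V+1))` on `[0,1]`. -/
theorem statement7 (d : ℕ) (hd : 1 ≤ d) (C1 : ℝ) (hC1 : 0 < C1)
    (σ0 : ℝ → ℝ) (hσ : ContDiff ℝ 2 σ0)
    (hb0 : ∀ x : ℝ, |σ0 x| ≤ C1 * max |x| 1)
    (hb1 : ∀ x : ℝ, |deriv σ0 x| ≤ C1)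
    (hb2 : ∀ x : ℝ, |deriv (deriv σ0) x| ≤ C1)
    (α : ℝ) (hα : 0 < α)
    (ν : ℝ → Measure (EuclideanSpace ℝ (Fin d) × EuclideanSpace ℝ (Fin d) × ℝ))
    (hprob : ∀ s, IsProbabilityMeasure (ν s))
    (τ : Measure (ℝ × EuclideanSpace ℝ (Fin d) × ℝ)) (hτ : IsProbabilityMeasure τ)
    (V T : ℝ)
    (hmom : ∀ s ∈ Set.Icc (0 : ℝ) 1,
      Integrable (fun θ => thetaNormSq d θ) (ν s) ∧ ∫ θ, thetaNormSq d θ ∂(ν s) ≤ V)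
    (hmomτ : Integrable (fun ω => omegaNormSq d ω) τ ∧ ∫ ω, omegaNormSq d ω ∂τ ≤ T)
    (x : EuclideanSpace ℝ (Fin d)) (z : ℝ → EuclideanSpace ℝ (Fin d))
    (hzint : ∀ s ∈ Set.Icc (0 : ℝ) 1, Integrable (sigmaV d σ0 (z s)) (ν s))
    (hz0 : z 0 = x)
    (hz : ∀ s ∈ Set.Icc (0 : ℝ) 1,
      HasDerivWithinAt z (α • ∫ θ, sigmaV d σ0 (z s) θ ∂(ν s)) (Set.Icc (0 : ℝ) 1) s)
    -- the integrals defining the adjoint ODE are well defined :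
    (hMint : ∀ s ∈ Set.Icc (0 : ℝ) 1, ∀ i j : Fin d,
      Integrable (fun θ => deriv σ0 (⟪θ.2.1, z s⟫ + θ.2.2) * θ.1 i * θ.2.1 j) (ν s))
    (hτint : Integrable (gradZh d σ0 (z 1)) τ)
    (p : ℝ → EuclideanSpace ℝ (Fin d))
    (hp : ∀ s ∈ Set.Icc (0 : ℝ) 1,
      HasDerivWithinAt p
        ((-α) • ((WithLp.toLp 2 ((intJacZ d σ0 (z s) (ν s)).transpose.mulVec (p s)) :
          EuclideanSpace ℝ (Fin d)))) (Set.Icc (0 : ℝ) 1) s)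
    (hp1 : p 1 = ∫ ω, gradZh d σ0 (z 1) ω ∂τ) :
    ∀ s ∈ Set.Icc (0 : ℝ) 1, ‖p s‖ ≤ C1 * (T + 1) * Real.exp (α * C1 * (V + 1)) := by
  have hV : 0 ≤ V := le_trans (integral_nonneg fun θ => by unfold thetaNormSq; positivity)
    (hmom 0 (by simp)).2
  have hT : 0 ≤ T := le_trans (integral_nonneg fun θ => by unfold omegaNormSq; positivity) hmomτ.2
  have hend : ‖p 1‖ ≤ C1 * (T + 1) := by
    rw [hp1]
    calc _ ≤ ∫ ω, C1 * omegaNormSq d ω ∂τ := by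
          refine norm_integral_le_of_norm_le (hmomτ.1.const_mul _)
            (Filter.Eventually.of_forall fun ω => ?_)
          have a1 := hb1 (⟪ω.2.1, z 1⟫ + ω.2.2)
          rw [gradZh, norm_smul, norm_mul, Real.norm_eq_abs, Real.norm_eq_abs]
          calc _ ≤ |ω.1| * C1 * ‖ω.2.1‖ := by gcongr
            _ = C1 * (|ω.1| * ‖ω.2.1‖) := by ring
            _ ≤ _ := by
              gcongr
              unfold omegaNormSq
              nlinarith [sq_nonneg (|ω.1| - ‖ω.2.1‖), sq_abs ω.1, sq_nonneg ω.1,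
                sq_nonneg (‖ω.2.1‖), sq_nonneg ω.2.2]
      _ = C1 * ∫ ω, omegaNormSq d ω ∂τ := integral_const_mul _ _
      _ ≤ _ := by gcongr; linarith [hmomτ.2]
  have hmaps : MapsTo (fun t : ℝ => 1 - t) (Icc 0 1) (Icc 0 1) := fun t ht =>
    ⟨by linarith [ht.2], by linarith [ht.1]⟩
  have hder : ∀ t ∈ Icc (0 : ℝ) 1, HasDerivWithinAt (fun t => p (1 - t))
      ((-1 : ℝ) • ((-α) • ((WithLp.toLp 2 ((intJacZ d σ0 (z (1 - t)) (ν (1 - t))).transpose.mulVec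
        (p (1 - t))) : EuclideanSpace ℝ (Fin d))))) (Icc (0 : ℝ) 1) t := by
    intro t ht
    have hlin : HasDerivWithinAt (fun t : ℝ => 1 - t) (-1) (Icc (0 : ℝ) 1) t :=
      ((hasDerivAt_id t).const_sub 1).hasDerivWithinAt
    exact (hp (1 - t) (hmaps ht)).scomp t hlin hmaps
  have hg := norm_le_gronwallBound_of_norm_deriv_right_le (f := fun t => p (1 - t))
    (δ := C1 * (T + 1)) (K := α * (C1 * V)) (ε := 0) (a := 0) (b := 1)
    (fun t ht => (hder t ht).continuousWithinAt)
    (fun t ht => (hder t ⟨ht.1, ht.2.le⟩).mono_of_mem_nhdsWithin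
      (Icc_mem_nhdsGE_of_mem ht))
    (by simpa using hend)
    (fun t ht => by
      have hm := hmaps (⟨ht.1, ht.2.le⟩ : t ∈ Icc (0 : ℝ) 1)
      have hj := jac_inner_bound d C1 hC1 σ0 hb1 (ν (1 - t)) V (hmom _ hm).1 (hmom _ hm).2
        (z (1 - t)) (hMint _ hm) (p (1 - t))
      rw [norm_smul, norm_smul, norm_neg, norm_neg, norm_one, Real.norm_eq_abs, abs_of_pos hα,
        one_mul, add_zero, mul_assoc]
      gcongr)
  intro s hs
  have h := hg (1 - s) (hmaps hs)
  rw [gronwallBound_ε0] at h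
  simp only [sub_sub_cancel, sub_zero] at h
  refine h.trans (mul_le_mul_of_nonneg_left (Real.exp_le_exp.2 ?_) (by positivity))
  have hs' : 1 - s ≤ 1 := by linarith [hs.1]
  calc α * (C1 * V) * (1 - s) ≤ α * (C1 * V) * 1 := by gcongr
    _ ≤ α * C1 * (V + 1) := by nlinarith [mul_pos hα hC1]

end
end

section
/- Let n ≥ 2, m ≥ 1, and let v₁,…,vₙ ∈ ℝ^m satisfy ‖vᵢ‖₂ = 1 for all i and |⟨vᵢ,vⱼ⟩| ≤ c for all i ≠ j, where 0 ≤ c < 1. Let f : ℝ → ℝ be measurable with ∫ f² dγ₁ < ∞, and let K be the n×n matrix with K_{ij} = ∫ f(⟨w,vᵢ⟩)·f(⟨w,vⱼ⟩) dγ_m(w). Then for every integer r ≥ 2·log(2n)/(1−c), the smallest eigenvalue of K satisfies λ_min(K) ≥ μ_r(f)²·(1−(n−1)·c^r) ≥ μ_r(f)²/2. -/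
open MeasureTheory ProbabilityTheory Real Set
open scoped RealInnerProductSpace

noncomputable section

/-- The standard Gaussian measure on `ℝ^m = EuclideanSpace ℝ (Fin m)`. -/
def gaussE (m : ℕ) : Measure (EuclideanSpace ℝ (Fin m)) :=
  (Measure.pi fun _ : Fin m => gaussianReal 0 1).map (MeasurableEquiv.toLp 2 (Fin m → ℝ))

/-- The `k`-th Hermite coefficient `μ_k(f) = ∫ f · He_k dγ₁`, where `He_k` is the `k`-th
Hermite polynomial normalized to be orthonormal in `L²(γ₁)`, i.e. the probabilists' Hermite
polynomial divided by `√(k!)`. -/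
def hermiteCoeff (f : ℝ → ℝ) (k : ℕ) : ℝ :=
  ∫ x, f x * (Polynomial.aeval x (Polynomial.hermite k) / Real.sqrt (Nat.factorial k))
    ∂(gaussianReal 0 1)

open Polynomial in
/-- Real-coefficient probabilists' Hermite polynomial. -/
def hermR (k : ℕ) : Polynomial ℝ := (Polynomial.hermite k).map (Int.castRingHom ℝ)

lemma hermR_eval (k : ℕ) (x : ℝ) :
    Polynomial.aeval x (Polynomial.hermite k) = (hermR k).eval x := by
  rw [hermR, Polynomial.eval_map, Polynomial.aeval_def]
  rfl

lemma hermR_zero : hermR 0 = 1 := by simp [hermR]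

lemma hermR_succ (k : ℕ) :
    hermR (k + 1) = Polynomial.X * hermR k - Polynomial.derivative (hermR k) := by
  simp [hermR, Polynomial.hermite_succ, Polynomial.derivative_map]

lemma hermR_deriv (k : ℕ) :
    Polynomial.derivative (hermR (k + 1)) = ((k : ℝ) + 1) • hermR k := by
  induction k with
  | zero => simp [hermR_succ, hermR_zero]
  | succ k ih =>
    rw [hermR_succ (k + 1), Polynomial.derivative_sub, Polynomial.derivative_mul, ih,
      Polynomial.derivative_smul, Polynomial.derivative_X, hermR_succ k]
    simp only [Polynomial.smul_eq_C_mul]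
    push_cast
    simp only [Polynomial.C_add, Polynomial.C_1]
    ring

lemma poly_integrable (p : Polynomial ℝ) : Integrable (fun x => p.eval x) (gaussianReal 0 1) := by
  have hpow : ∀ k : ℕ, Integrable (fun x : ℝ => x ^ k) (gaussianReal 0 1) := fun k =>
    integrable_pow_of_mem_interior_integrableExpSet (X := id) (by simp) k
  simp_rw [Polynomial.eval_eq_sum_range]
  exact integrable_finsetSum _ fun i _ => (hpow i).const_mul _

lemma poly_memLp (p : Polynomial ℝ) : MemLp (fun x => p.eval x) 2 (gaussianReal 0 1) := by
  rw [memLp_two_iff_integrable_sq p.continuous.aestronglyMeasurable]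
  exact (poly_integrable (p ^ 2)).congr (ae_of_all _ fun x => Polynomial.eval_pow 2)

lemma gauss_ibp (p : Polynomial ℝ) :
    ∫ x, x * p.eval x ∂(gaussianReal 0 1) = ∫ x, p.derivative.eval x ∂(gaussianReal 0 1) := by
  have hint : ∀ q : Polynomial ℝ, Integrable (fun x => gaussianPDFReal 0 1 x * q.eval x) := by
    intro q
    have h := poly_integrable q
    rw [gaussianReal_of_var_ne_zero _ one_ne_zero,
      integrable_withDensity_iff_integrable_smul' (measurable_gaussianPDF 0 1)
      (Filter.Eventually.of_forall fun x => gaussianPDF_lt_top)] at h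
    simpa [toReal_gaussianPDF] using h
  have hd : ∀ x, HasDerivAt (fun x => gaussianPDFReal 0 1 x * p.eval x)
      (gaussianPDFReal 0 1 x * (p.derivative - Polynomial.X * p).eval x) x := by
    intro x
    have h1 : HasDerivAt (gaussianPDFReal 0 1) (gaussianPDFReal 0 1 x * (-x)) x := by
      rw [gaussianPDFReal_def]
      have h2 : HasDerivAt (fun x : ℝ => -(x - 0) ^ 2 / (2 * ((1 : NNReal) : ℝ))) (-x) x := by
        have := (((hasDerivAt_id x).sub_const 0).pow 2).neg.div_const (2 * ((1 : NNReal) : ℝ))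
        have e : (-x) = -(((2 : ℕ) : ℝ) * (id x - 0) ^ (2 - 1) * 1) / (2 * ((1 : NNReal) : ℝ)) := by
          simp
          ring
        rw [e]
        exact this
      have h3 := (h2.exp).const_mul (√(2 * π * ((1 : NNReal) : ℝ)))⁻¹
      rw [← mul_assoc] at h3
      exact h3
    have h2 := h1.mul (p.hasDerivAt x)
    have e : gaussianPDFReal 0 1 x * (p.derivative - Polynomial.X * p).eval x
        = gaussianPDFReal 0 1 x * (-x) * p.eval x
          + gaussianPDFReal 0 1 x * p.derivative.eval x := by
      rw [Polynomial.eval_sub, Polynomial.eval_mul, Polynomial.eval_X]; ring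
    rw [e]
    exact h2
  have h0 := integral_eq_zero_of_hasDerivAt_of_integrable hd (hint _) (hint _)
  have h1 : ∫ x, (p.derivative - Polynomial.X * p).eval x ∂(gaussianReal 0 1) = 0 := by
    rw [integral_gaussianReal_eq_integral_smul one_ne_zero]
    simpa using h0
  have h2 : ∫ x, (p.derivative.eval x - (Polynomial.X * p).eval x) ∂(gaussianReal 0 1) = 0 := by
    simpa using h1
  rw [integral_sub (poly_integrable _) (poly_integrable _)] at h2
  simp only [Polynomial.eval_mul, Polynomial.eval_X] at h2
  linarith

lemma herm_norm (k : ℕ) :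
    ∫ x, (hermR k).eval x * (hermR k).eval x ∂(gaussianReal 0 1) = (k.factorial : ℝ) := by
  induction k with
  | zero => simp [hermR_zero]
  | succ k ih =>
    have h := gauss_ibp (hermR (k + 1) * hermR k)
    have e1 : ∫ x, (hermR (k+1)).eval x * (hermR (k+1)).eval x ∂(gaussianReal 0 1)
      = ∫ x, (x * (hermR (k + 1) * hermR k).eval x
        - (hermR (k + 1) * (hermR k).derivative).eval x) ∂(gaussianReal 0 1) := by
      congr 1; ext x
      have : (hermR (k+1)).eval x = x * (hermR k).eval x - (hermR k).derivative.eval x := by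
        rw [hermR_succ]; simp
      nth_rewrite 2 [this]
      simp; ring
    have hi : Integrable (fun x => x * (hermR (k + 1) * hermR k).eval x) (gaussianReal 0 1) := by
      exact (poly_integrable (Polynomial.X * (hermR (k + 1) * hermR k))).congr
        (ae_of_all _ fun x => by simp only [Polynomial.eval_mul, Polynomial.eval_X])
    rw [e1, integral_sub hi (poly_integrable _), h,
      ← integral_sub (poly_integrable _) (poly_integrable _)]
    have e2 : ∀ x, (Polynomial.derivative (hermR (k + 1) * hermR k)).eval x
        - (hermR (k + 1) * (hermR k).derivative).eval x
        = ((k : ℝ) + 1) * ((hermR k).eval x * (hermR k).eval x) := by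
      intro x
      rw [Polynomial.derivative_mul, hermR_deriv]
      simp only [Polynomial.eval_add, Polynomial.eval_mul, Polynomial.eval_smul, smul_eq_mul]
      ring
    simp_rw [e2]
    rw [integral_const_mul, ih, Nat.factorial_succ]
    push_cast; ring

lemma ou_aux (ρ s : ℝ) (hs : ρ ^ 2 + s ^ 2 = 1) (x : ℝ) (k : ℕ) :
    ∫ z, (hermR k).eval (ρ * x + s * z) ∂(gaussianReal 0 1) = ρ ^ k * (hermR k).eval x ∧
    ∫ z, (hermR (k+1)).eval (ρ * x + s * z) ∂(gaussianReal 0 1)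
      = ρ ^ (k+1) * (hermR (k+1)).eval x := by
  have hq : ∀ (p : Polynomial ℝ) z, p.eval (ρ * x + s * z)
      = (p.comp (Polynomial.C (ρ * x) + Polynomial.C s * Polynomial.X)).eval z := by
    intro p z; simp
  have hI : ∀ p : Polynomial ℝ,
      Integrable (fun z => p.eval (ρ * x + s * z)) (gaussianReal 0 1) := by
    intro p; simp_rw [hq]; exact poly_integrable _
  have hI2 : ∀ p : Polynomial ℝ,
      Integrable (fun z => z * p.eval (ρ * x + s * z)) (gaussianReal 0 1) := by
    intro p; simp_rw [hq]
    exact (poly_integrable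
      (Polynomial.X * (p.comp (Polynomial.C (ρ * x) + Polynomial.C s * Polynomial.X)))).congr
        (ae_of_all _ fun z => by simp only [Polynomial.eval_mul, Polynomial.eval_X])
  have step : ∀ k, ∫ z, (hermR (k+1)).eval (ρ * x + s * z) ∂(gaussianReal 0 1)
      = ρ * x * ∫ z, (hermR k).eval (ρ * x + s * z) ∂(gaussianReal 0 1)
        - ρ ^ 2 * ∫ z, (hermR k).derivative.eval (ρ * x + s * z) ∂(gaussianReal 0 1) := by
    intro k
    have e : ∀ z, (hermR (k+1)).eval (ρ * x + s * z)
        = (ρ * x * (hermR k).eval (ρ * x + s * z) + s * (z * (hermR k).eval (ρ * x + s * z)))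
          - (hermR k).derivative.eval (ρ * x + s * z) := by
      intro z; rw [hermR_succ]; simp; ring
    simp_rw [e]
    have hb : ∫ z, z * (hermR k).eval (ρ * x + s * z) ∂(gaussianReal 0 1)
        = s * ∫ z, (hermR k).derivative.eval (ρ * x + s * z) ∂(gaussianReal 0 1) := by
      simp_rw [hq (hermR k)]
      rw [gauss_ibp, ← integral_const_mul]
      congr 1; ext z
      rw [Polynomial.derivative_comp]
      simp
    have i1 : Integrable (fun z => ρ * x * (hermR k).eval (ρ * x + s * z)
        + s * (z * (hermR k).eval (ρ * x + s * z))) (gaussianReal 0 1) :=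
      ((hI _).const_mul _).add ((hI2 _).const_mul _)
    rw [integral_sub i1 (hI _),
      integral_add ((hI _).const_mul _) ((hI2 _).const_mul _), integral_const_mul,
      integral_const_mul, hb]
    linear_combination (∫ z, (hermR k).derivative.eval (ρ * x + s * z) ∂(gaussianReal 0 1)) * hs
  induction k with
  | zero =>
    refine ⟨by simp [hermR_zero], ?_⟩
    rw [step]; simp [hermR_zero, hermR_succ]
  | succ k ih =>
    refine ⟨ih.2, ?_⟩
    rw [step, ih.2, hermR_deriv]
    simp only [Polynomial.eval_smul, smul_eq_mul]
    rw [integral_const_mul, ih.1, hermR_succ (k+1), hermR_deriv]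
    simp only [Polynomial.eval_sub, Polynomial.eval_mul, Polynomial.eval_X, Polynomial.eval_smul,
      smul_eq_mul]
    ring

lemma gaussE_eq (m : ℕ) : gaussE m = stdGaussian (EuclideanSpace ℝ (Fin m)) := by
  rw [← map_pi_eq_stdGaussian]; rfl

lemma pair_law (m : ℕ) (a b : EuclideanSpace ℝ (Fin m)) (ha : ‖a‖ = 1) (hb : ‖b‖ = 1)
    (s : ℝ) (hs : ⟪a, b⟫ ^ 2 + s ^ 2 = 1) :
    (gaussE m).map (fun w => (⟪w, a⟫, ⟪w, b⟫)) =
    ((gaussianReal 0 1).prod (gaussianReal 0 1)).map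
      (fun p : ℝ × ℝ => (p.1, ⟪a, b⟫ * p.1 + s * p.2)) := by
  rw [gaussE_eq]
  set ρ : ℝ := ⟪a, b⟫ with hρ
  have m1 : Measurable (fun w : EuclideanSpace ℝ (Fin m) => ((⟪w, a⟫ : ℝ), (⟪w, b⟫ : ℝ))) := by
    fun_prop
  have m2 : Measurable (fun p : ℝ × ℝ => (p.1, ρ * p.1 + s * p.2)) := by fun_prop
  have := Measure.isProbabilityMeasure_map (μ := stdGaussian (EuclideanSpace ℝ (Fin m)))
    m1.aemeasurable
  have := Measure.isProbabilityMeasure_map (μ := (gaussianReal 0 1).prod (gaussianReal 0 1))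
    m2.aemeasurable
  apply Measure.ext_of_charFunDual
  ext L
  have hL : ∀ x y : ℝ, L (x, y) = L (1, 0) * x + L (0, 1) * y := by
    intro x y
    have : ((x, y) : ℝ × ℝ) = x • (1, 0) + y • (0, 1) := by simp
    rw [this, map_add, map_smul, map_smul]; simp; ring
  set α := L (1, 0)
  set β := L (0, 1)
  rw [charFunDual_apply, charFunDual_apply, integral_map m1.aemeasurable (by fun_prop),
    integral_map m2.aemeasurable (by fun_prop)]
  have e1 : ∀ w : EuclideanSpace ℝ (Fin m),
      L ((⟪w, a⟫ : ℝ), (⟪w, b⟫ : ℝ)) = ⟪w, α • a + β • b⟫ := by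
    intro w; rw [hL, inner_add_right, real_inner_smul_right, real_inner_smul_right]
  have e2 : ∀ p : ℝ × ℝ, Complex.exp ((L (p.1, ρ * p.1 + s * p.2) : ℝ) * Complex.I)
      = Complex.exp (((α + β * ρ : ℝ) : ℂ) * p.1 * Complex.I)
        * Complex.exp (((β * s : ℝ) : ℂ) * p.2 * Complex.I) := by
    intro p; rw [hL, ← Complex.exp_add]; congr 1; push_cast; ring
  simp_rw [e1, e2]
  rw [← charFun_apply, charFun_stdGaussian,
    integral_prod_mul (fun x : ℝ => Complex.exp (((α + β * ρ : ℝ) : ℂ) * x * Complex.I))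
      (fun x : ℝ => Complex.exp (((β * s : ℝ) : ℂ) * x * Complex.I)),
    ← charFun_apply_real, ← charFun_apply_real, charFun_gaussianReal, charFun_gaussianReal,
    ← Complex.exp_add]
  have hn : ‖α • a + β • b‖ ^ 2 = (α + β * ρ) ^ 2 + (β * s) ^ 2 := by
    rw [norm_add_sq_real, norm_smul, norm_smul, ha, hb, real_inner_smul_left,
      real_inner_smul_right, ← hρ, mul_one, mul_one, Real.norm_eq_abs, Real.norm_eq_abs,
      sq_abs, sq_abs]
    linear_combination -β ^ 2 * hs
  congr 1
  have hn' := congrArg (fun t : ℝ => (t : ℂ)) hn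
  push_cast at hn' ⊢
  rw [hn']
  ring

lemma exists_s {m : ℕ} (a b : EuclideanSpace ℝ (Fin m)) (ha : ‖a‖ = 1) (hb : ‖b‖ = 1) :
    ∃ s : ℝ, ⟪a, b⟫ ^ 2 + s ^ 2 = 1 := by
  have h := abs_real_inner_le_norm a b
  rw [ha, hb, mul_one] at h
  have h2 : (⟪a, b⟫ : ℝ) ^ 2 ≤ 1 := by rwa [sq_le_one_iff_abs_le_one]
  exact ⟨√(1 - ⟪a, b⟫ ^ 2), by rw [Real.sq_sqrt (by linarith)]; ring⟩

lemma marginal (m : ℕ) (a : EuclideanSpace ℝ (Fin m)) (ha : ‖a‖ = 1) :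
    MeasurePreserving (fun w => (⟪w, a⟫ : ℝ)) (gaussE m) (gaussianReal 0 1) := by
  refine ⟨by fun_prop, ?_⟩
  obtain ⟨s, hs⟩ := exists_s a a ha ha
  have h := congrArg (Measure.map Prod.fst) (pair_law m a a ha ha s hs)
  rw [Measure.map_map (by fun_prop) (by fun_prop),
    Measure.map_map (by fun_prop) (by fun_prop)] at h
  have h3 : Measure.map Prod.fst ((gaussianReal 0 1).prod (gaussianReal 0 1))
    = gaussianReal 0 1 := by simp
  rw [← h3]
  exact h

lemma corr (m : ℕ) (a b : EuclideanSpace ℝ (Fin m)) (ha : ‖a‖ = 1) (hb : ‖b‖ = 1)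
    (f : ℝ → ℝ) (hf : Measurable f) (hL2 : MemLp f 2 (gaussianReal 0 1)) (r : ℕ) :
    ∫ w, f ⟪w, a⟫ * (hermR r).eval ⟪w, b⟫ ∂(gaussE m)
      = ⟪a, b⟫ ^ r * ∫ x, f x * (hermR r).eval x ∂(gaussianReal 0 1) := by
  obtain ⟨s, hs⟩ := exists_s a b ha hb
  have hlaw := pair_law m a b ha hb s hs
  set ρ : ℝ := ⟪a, b⟫ with hρ
  have m1 : Measurable (fun w : EuclideanSpace ℝ (Fin m) => ((⟪w, a⟫ : ℝ), (⟪w, b⟫ : ℝ))) := by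
    fun_prop
  have m2 : Measurable (fun p : ℝ × ℝ => (p.1, ρ * p.1 + s * p.2)) := by fun_prop
  have hpm : Measurable (fun x => (hermR r).eval x) := (hermR r).continuous.measurable
  have mg : Measurable (fun q : ℝ × ℝ => f q.1 * (hermR r).eval q.2) :=
    (hf.comp measurable_fst).mul (hpm.comp measurable_snd)
  have hint : Integrable (fun w => f ⟪w, a⟫ * (hermR r).eval ⟪w, b⟫) (gaussE m) :=
    (hL2.comp_measurePreserving (marginal m a ha)).integrable_mul
      ((poly_memLp (hermR r)).comp_measurePreserving (marginal m b hb))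
  have hint1 : Integrable (fun q : ℝ × ℝ => f q.1 * (hermR r).eval q.2)
      ((gaussE m).map (fun w => (⟪w, a⟫, ⟪w, b⟫))) :=
    (integrable_map_measure mg.aestronglyMeasurable m1.aemeasurable).2 hint
  have e1 : ∫ w, f ⟪w, a⟫ * (hermR r).eval ⟪w, b⟫ ∂(gaussE m)
      = ∫ q, f q.1 * (hermR r).eval q.2 ∂((gaussE m).map (fun w => (⟪w, a⟫, ⟪w, b⟫))) := by
    rw [integral_map m1.aemeasurable mg.aestronglyMeasurable]
  rw [hlaw] at hint1
  have hint2 : Integrable (fun p : ℝ × ℝ => f p.1 * (hermR r).eval (ρ * p.1 + s * p.2))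
      ((gaussianReal 0 1).prod (gaussianReal 0 1)) :=
    (integrable_map_measure mg.aestronglyMeasurable m2.aemeasurable).1 hint1
  rw [e1, hlaw, integral_map m2.aemeasurable mg.aestronglyMeasurable]
  simp only
  rw [integral_prod _ hint2]
  simp only
  simp_rw [integral_const_mul]
  rw [← integral_const_mul]
  congr 1; ext x
  rw [(ou_aux ρ s hs x r).1]
  ring

lemma gersh (n : ℕ) (u : Fin n → ℝ) (G : Fin n → Fin n → ℝ) (d : ℝ) (hd : 0 ≤ d)
    (h1 : ∀ i, G i i = 1) (h2 : ∀ i j, i ≠ j → |G i j| ≤ d) :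
    (1 - ((n : ℝ) - 1) * d) * ∑ i, u i ^ 2 ≤ ∑ i, ∑ j, u i * u j * G i j := by
  have h3 : ∀ i j, (if i = j then (1 + d) * u i ^ 2 else 0) - d * (|u i| * |u j|)
      ≤ u i * u j * G i j := by
    intro i j
    split_ifs with h
    · subst h
      rw [h1, abs_mul_abs_self]
      apply le_of_eq; ring
    · have := neg_abs_le (u i * u j * G i j)
      rw [abs_mul, abs_mul] at this
      have h4 := mul_le_mul_of_nonneg_left (h2 i j h)
        (mul_nonneg (abs_nonneg (u i)) (abs_nonneg (u j)))
      linarith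
  have h4 : ∑ i, ∑ j, ((if i = j then (1 + d) * u i ^ 2 else 0) - d * (|u i| * |u j|))
      ≤ ∑ i, ∑ j, u i * u j * G i j :=
    Finset.sum_le_sum fun i _ => Finset.sum_le_sum fun j _ => h3 i j
  refine le_trans ?_ h4
  have h5 : (∑ i, |u i|) ^ 2 ≤ n * ∑ i, u i ^ 2 := by
    have := sq_sum_le_card_mul_sum_sq (s := Finset.univ) (f := fun i => |u i|)
    simpa using this
  have h6 : ∑ i, ∑ j, |u i| * |u j| = (∑ i, |u i|) ^ 2 := by
    rw [sq, Finset.sum_mul_sum]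
  simp only [Finset.sum_sub_distrib, ← Finset.mul_sum, Finset.sum_ite_eq, Finset.mem_univ, if_true]
  simp only [Finset.mul_sum] at h6 ⊢
  simp only [← Finset.mul_sum, Finset.sum_ite_eq, Finset.mem_univ, if_true] at h6 ⊢
  rw [h6]
  nlinarith [mul_le_mul_of_nonneg_left h5 hd]

lemma cr_bound (n : ℕ) (hn : 2 ≤ n) (c : ℝ) (hc0 : 0 ≤ c) (hc1 : c < 1) (r : ℕ)
    (hr : 2 * Real.log (2 * n) / (1 - c) ≤ r) : ((n : ℝ) - 1) * c ^ r ≤ 1 / 2 := by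
  have hn' : (2 : ℝ) ≤ n := by exact_mod_cast hn
  have h1 : 2 * Real.log (2 * n) ≤ r * (1 - c) := (div_le_iff₀ (by linarith)).1 hr
  have hl : 0 ≤ Real.log (2 * n) := Real.log_nonneg (by linarith)
  have h2 : c ^ r ≤ (2 * (n : ℝ))⁻¹ := by
    calc c ^ r ≤ (Real.exp (-(1 - c))) ^ r := by
          gcongr
          have := Real.add_one_le_exp (-(1 - c))
          linarith
      _ = Real.exp (-(r * (1 - c))) := by rw [← Real.exp_nat_mul]; congr 1; ring
      _ ≤ Real.exp (-Real.log (2 * n)) := by gcongr; linarith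
      _ = (2 * (n : ℝ))⁻¹ := by rw [Real.exp_neg, Real.exp_log (by linarith)]
  calc ((n : ℝ) - 1) * c ^ r ≤ n * (2 * (n : ℝ))⁻¹ := by
        gcongr
        linarith
    _ = 1 / 2 := by field_simp

lemma quad_bound (n m : ℕ) (v : Fin n → EuclideanSpace ℝ (Fin m)) (hunit : ∀ i, ‖v i‖ = 1)
    (f : ℝ → ℝ) (hf : Measurable f) (hL2 : MemLp f 2 (gaussianReal 0 1)) (r : ℕ)
    (u : Fin n → ℝ) :
    hermiteCoeff f r ^ 2 * ∑ i, ∑ j, u i * u j * ⟪v i, v j⟫ ^ r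
      ≤ ∑ i, ∑ j, u i * u j * ∫ w, f ⟪w, v i⟫ * f ⟪w, v j⟫ ∂(gaussE m) := by
  set μ := hermiteCoeff f r with hμ
  set q : ℝ := √(r.factorial : ℝ) with hq
  have hq0 : 0 < q := Real.sqrt_pos.2 (by exact_mod_cast r.factorial_pos)
  have hqq : q * q = (r.factorial : ℝ) := Real.mul_self_sqrt (by positivity)
  set A : ℝ := ∫ x, f x * (hermR r).eval x ∂(gaussianReal 0 1) with hA
  have hμA : μ = A / q := by
    rw [hμ, hA, hermiteCoeff, ← integral_div]
    congr 1; ext x; rw [hermR_eval]; ring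
  have hfi : ∀ i, MemLp (fun w => f ⟪w, v i⟫) 2 (gaussE m) := fun i =>
    hL2.comp_measurePreserving (marginal m (v i) (hunit i))
  have hhi : ∀ i, MemLp (fun w => (hermR r).eval ⟪w, v i⟫) 2 (gaussE m) := fun i =>
    (poly_memLp (hermR r)).comp_measurePreserving (marginal m (v i) (hunit i))
  set t : ℝ := μ / q with ht
  have hg : ∀ i, MemLp (fun w => f ⟪w, v i⟫ - t * (hermR r).eval ⟪w, v i⟫) 2 (gaussE m) :=
    fun i => (hfi i).sub ((hhi i).const_mul t)
  have hgg : ∀ i j, ∫ w, (f ⟪w, v i⟫ - t * (hermR r).eval ⟪w, v i⟫)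
        * (f ⟪w, v j⟫ - t * (hermR r).eval ⟪w, v j⟫) ∂(gaussE m)
      = (∫ w, f ⟪w, v i⟫ * f ⟪w, v j⟫ ∂(gaussE m)) - μ ^ 2 * ⟪v i, v j⟫ ^ r := by
    intro i j
    have e : ∀ w, (f ⟪w, v i⟫ - t * (hermR r).eval ⟪w, v i⟫)
        * (f ⟪w, v j⟫ - t * (hermR r).eval ⟪w, v j⟫)
        = (f ⟪w, v i⟫ * f ⟪w, v j⟫ - t * (f ⟪w, v i⟫ * (hermR r).eval ⟪w, v j⟫))
          - (t * (f ⟪w, v j⟫ * (hermR r).eval ⟪w, v i⟫)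
            - t ^ 2 * ((hermR r).eval ⟪w, v i⟫ * (hermR r).eval ⟪w, v j⟫)) := by
      intro w; ring
    simp_rw [e]
    have i1 : Integrable (fun w => f ⟪w, v i⟫ * f ⟪w, v j⟫) (gaussE m) :=
      (hfi i).integrable_mul (hfi j)
    have i2 : Integrable (fun w => t * (f ⟪w, v i⟫ * (hermR r).eval ⟪w, v j⟫)) (gaussE m) :=
      ((hfi i).integrable_mul (hhi j)).const_mul t
    have i3 : Integrable (fun w => t * (f ⟪w, v j⟫ * (hermR r).eval ⟪w, v i⟫)) (gaussE m) :=
      ((hfi j).integrable_mul (hhi i)).const_mul t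
    have i4 : Integrable (fun w => t ^ 2 *
        ((hermR r).eval ⟪w, v i⟫ * (hermR r).eval ⟪w, v j⟫)) (gaussE m) :=
      ((hhi i).integrable_mul (hhi j)).const_mul _
    have i5 : Integrable (fun w => f ⟪w, v i⟫ * f ⟪w, v j⟫
        - t * (f ⟪w, v i⟫ * (hermR r).eval ⟪w, v j⟫)) (gaussE m) := i1.sub i2
    have i6 : Integrable (fun w => t * (f ⟪w, v j⟫ * (hermR r).eval ⟪w, v i⟫)
        - t ^ 2 * ((hermR r).eval ⟪w, v i⟫ * (hermR r).eval ⟪w, v j⟫)) (gaussE m) := i3.sub i4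
    rw [integral_sub i5 i6, integral_sub i1 i2, integral_sub i3 i4,
      integral_const_mul, integral_const_mul, integral_const_mul,
      corr m _ _ (hunit i) (hunit j) f hf hL2 r, corr m _ _ (hunit j) (hunit i) f hf hL2 r,
      corr m _ _ (hunit i) (hunit j) (fun x => (hermR r).eval x)
        (hermR r).continuous.measurable (poly_memLp _) r, herm_norm, ← hA,
      real_inner_comm (v i) (v j), ← hqq]
    have hAq : A = μ * q := by rw [hμA]; field_simp
    have htq : t * q = μ := by rw [ht]; field_simp
    rw [hAq]
    linear_combination (⟪v i, v j⟫ ^ r * (t * q) - ⟪v i, v j⟫ ^ r * μ) * htq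
  have hnn : 0 ≤ ∫ w, (∑ i, u i * (f ⟪w, v i⟫ - t * (hermR r).eval ⟪w, v i⟫)) ^ 2 ∂(gaussE m) :=
    integral_nonneg fun w => sq_nonneg _
  have hex : ∫ w, (∑ i, u i * (f ⟪w, v i⟫ - t * (hermR r).eval ⟪w, v i⟫)) ^ 2 ∂(gaussE m)
      = ∑ i, ∑ j, u i * u j * ((∫ w, f ⟪w, v i⟫ * f ⟪w, v j⟫ ∂(gaussE m))
        - μ ^ 2 * ⟪v i, v j⟫ ^ r) := by
    simp_rw [← hgg, sq, Finset.sum_mul_sum, ← integral_const_mul]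
    have hI : ∀ i j, Integrable (fun w => u i * u j *
        ((f ⟪w, v i⟫ - t * (hermR r).eval ⟪w, v i⟫)
        * (f ⟪w, v j⟫ - t * (hermR r).eval ⟪w, v j⟫))) (gaussE m) := fun i j =>
      ((hg i).integrable_mul (hg j)).const_mul _
    simp_rw [← integral_finsetSum _ fun j _ => hI _ j]
    rw [← integral_finsetSum _ fun i _ => integrable_finsetSum _ fun j _ => hI i j]
    congr 1; ext w
    refine Finset.sum_congr rfl fun i _ => Finset.sum_congr rfl fun j _ => ?_
    ring
  rw [hex] at hnn
  simp_rw [mul_sub, Finset.sum_sub_distrib] at hnn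
  have : ∑ i, ∑ j, u i * u j * (μ ^ 2 * ⟪v i, v j⟫ ^ r)
      = μ ^ 2 * ∑ i, ∑ j, u i * u j * ⟪v i, v j⟫ ^ r := by
    simp_rw [Finset.mul_sum]
    refine Finset.sum_congr rfl fun i _ => Finset.sum_congr rfl fun j _ => ?_
    ring
  linarith

/-- lower bound on the smallest eigenvalue of the kernel matrix
`K_{ij} = ∫ f(⟪w,vᵢ⟫) f(⟪w,vⱼ⟫) dγ_m(w)` for unit vectors with pairwise correlations at
most `c < 1`, via the `r`-th Hermite coefficient of `f`. -/
theorem statement11 (n m : ℕ) (hn : 2 ≤ n) (hm : 1 ≤ m)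
    (v : Fin n → EuclideanSpace ℝ (Fin m))
    (hunit : ∀ i, ‖v i‖ = 1)
    (c : ℝ) (hc0 : 0 ≤ c) (hc1 : c < 1)
    (hcorr : ∀ i j, i ≠ j → |⟪v i, v j⟫| ≤ c)
    (f : ℝ → ℝ) (hf : Measurable f)
    (hL2 : Integrable (fun x => f x ^ 2) (gaussianReal 0 1)) :
    letI K : Matrix (Fin n) (Fin n) ℝ :=
      Matrix.of fun i j => ∫ w, f ⟪w, v i⟫ * f ⟪w, v j⟫ ∂(gaussE m)
    ∀ r : ℕ, 2 * Real.log (2 * n) / (1 - c) ≤ r →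
      ∀ hK : K.IsHermitian,
        hermiteCoeff f r ^ 2 * (1 - ((n : ℝ) - 1) * c ^ r) ≤ (⨅ i, hK.eigenvalues i) ∧
        hermiteCoeff f r ^ 2 / 2 ≤ hermiteCoeff f r ^ 2 * (1 - ((n : ℝ) - 1) * c ^ r) := by
  intro r hr hK
  have hcr := cr_bound n hn c hc0 hc1 r hr
  constructor
  · have : Nonempty (Fin n) := ⟨⟨0, by omega⟩⟩
    refine le_ciInf fun k => ?_
    have hmem : MemLp f 2 (gaussianReal 0 1) :=
      (memLp_two_iff_integrable_sq hf.aestronglyMeasurable).2 hL2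
    set u : Fin n → ℝ := fun i => hK.eigenvectorBasis k i with hu
    have hu1 : ∑ i, u i ^ 2 = 1 := by
      have h := hK.eigenvectorBasis.orthonormal.1 k
      have h2 := EuclideanSpace.real_norm_sq_eq (hK.eigenvectorBasis k)
      rw [h] at h2
      simpa using h2.symm
    have hq := quad_bound n m v hunit f hf hmem r u
    have hg := gersh n u (fun i j => ⟪v i, v j⟫ ^ r) (c ^ r) (by positivity)
      (fun i => by simp [hunit]) (fun i j hij => by
        rw [abs_pow]
        exact pow_le_pow_left₀ (abs_nonneg _) (hcorr i j hij) r)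
    rw [hu1, mul_one] at hg
    have hg2 := mul_le_mul_of_nonneg_left hg (sq_nonneg (hermiteCoeff f r))
    rw [hK.eigenvalues_eq k]
    refine (hg2.trans hq).trans (le_of_eq ?_)
    simp only [Matrix.mulVec, dotProduct, Matrix.of_apply, Finset.mul_sum]
    simp [hu]
    refine Finset.sum_congr rfl fun i _ => Finset.sum_congr rfl fun j _ => ?_
    ring
  · nlinarith [sq_nonneg (hermiteCoeff f r)]

end
end
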